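/- (Proposition 1, confidence-vector disclosure.) Fix an integer K ≥ 2 and reals ε_e > 0, Δ ≥ 0, ε_a with Δ/(1+Δ) < ε_a < 1, define γ^out, γ^in as in the parameterization below, and let μ^out, μ^in be the probability measures on S_K with densities f_{γ^out}, f_{γ^in}. Then for every measurable set A ⊆ S_K, μ^out(A) − μ^in(A) ≤ Adv^CV-ub(Δ, ε_a, ε_e, K). -/

import Mathlib

open MeasureTheory

/-- The open standard simplex `S_K` in coordinates `(p_0, …, p_{K-2}) ∈ ℝ^{K-1}`:
all coordinates positive and their sum less than 1 (so that `p_{K-1} = 1 - Σ` is positive). -/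
def simplexCoords (K : ℕ) : Set (Fin (K - 1) → ℝ) :=
  {x | (∀ i, 0 < x i) ∧ ∑ i, x i < 1}

/-- The full probability vector `p ∈ ℝ^K` obtained from the coordinates
`(p_0, …, p_{K-2})`, with `p_{K-1} = 1 - Σ_{k < K-1} p_k`. -/
noncomputable def fullProb (K : ℕ) (x : Fin (K - 1) → ℝ) : Fin K → ℝ :=
  fun k => if h : (k : ℕ) < K - 1 then x ⟨k, h⟩ else 1 - ∑ i, x i

/-- Multivariate Beta function `B(γ) = (∏ₖ Γ(γₖ)) / Γ(Σₖ γₖ)`. -/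
noncomputable def multiBeta {K : ℕ} (γ : Fin K → ℝ) : ℝ :=
  (∏ i, Real.Gamma (γ i)) / Real.Gamma (∑ i, γ i)

/-- Dirichlet density `f_γ(p) = (1/B(γ)) ∏ₖ pₖ^(γₖ - 1)` in simplex coordinates. -/
noncomputable def dirichletPdf {K : ℕ} (γ : Fin K → ℝ) (x : Fin (K - 1) → ℝ) : ℝ :=
  (1 / multiBeta γ) * ∏ k, (fullProb K x k) ^ (γ k - 1)

/-- Digamma function `ψ(x) = Γ'(x)/Γ(x)`. -/
noncomputable def digamma (x : ℝ) : ℝ := deriv Real.Gamma x / Real.Gamma x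

/-- Dirichlet parameters for the model trained *without* the target point. -/
noncomputable def gammaOut (K : ℕ) (epsE epsA : ℝ) : Fin K → ℝ := fun k =>
  if (k : ℕ) = 0 then (1 - epsA) / epsE else epsA / (((K : ℝ) - 1) * epsE)

/-- Dirichlet parameters for the model trained *with* the target point. -/
noncomputable def gammaIn (K : ℕ) (epsE Δ epsA : ℝ) : Fin K → ℝ := fun k =>
  if (k : ℕ) = 0 then (1 + Δ) * (1 - epsA) / epsE
  else (epsA * (1 + Δ) - Δ) / (((K : ℝ) - 1) * epsE)

/-- The upper bound on the attacker's advantage under confidence-vector disclosure. -/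
noncomputable def AdvCVub (Δ epsA epsE : ℝ) (K : ℕ) : ℝ :=
  Real.sqrt ((Δ * (1 - epsA) / epsE) *
    (digamma ((1 + Δ) * (1 - epsA) / epsE) - digamma ((1 - epsA) / epsE)
      + digamma (epsA / (((K : ℝ) - 1) * epsE))
      - digamma ((epsA * (1 + Δ) - Δ) / (((K : ℝ) - 1) * epsE))))

/-!
The Dirichlet distribution of parameter `γ + δ` is the exponential tilt of the one of parameter `γ`
by the log-linear statistic `T = ∑ k, δ k * log (p k)`. The symmetrized Kullback–Leibler divergence
of the two is therefore the difference of the expectations of `T` under them. Since the normalizing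
constant of the tilt is a ratio of Beta functions, the cumulant generating function of `T` is an
increment of `log B`, and its derivative at `0` evaluates these expectations through `ψ`. Total
variation is controlled by the symmetrized divergence through the pointwise inequality
`(h - 1) log h ≥ 2 (h - 1)² / (h + 1)`, `h` being the density of one measure with respect to the
other. That `f_γ` has mass one is the semigroup property of the Riemann–Liouville kernels
`x₊ ^ (a - 1) / Γ(a)` under convolution, evaluated at `1`.
-/

section KullbackLeibler

open Real InformationTheory

lemma two_mul_sub_one_sq_div_add_one_le_mul_log {h : ℝ} (hh : 0 < h) :
    2 * (h - 1) ^ 2 / (h + 1) ≤ (h - 1) * log h := by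
  have log_ge {y : ℝ} (hy : 1 ≤ y) : 2 * (y - 1) / (y + 1) ≤ log y := by
    have := le_log_one_add_of_nonneg (sub_nonneg.2 hy)
    rwa [add_sub_cancel, sub_add, show (1 : ℝ) - 2 = -1 by norm_num, sub_neg_eq_add] at this
  rcases le_or_gt 1 h with h1 | h1
  · calc 2 * (h - 1) ^ 2 / (h + 1) = (h - 1) * (2 * (h - 1) / (h + 1)) := by ring
      _ ≤ (h - 1) * log h := mul_le_mul_of_nonneg_left (log_ge h1) (sub_nonneg.2 h1)
  · calc 2 * (h - 1) ^ 2 / (h + 1) = (1 - h) * (2 * (h⁻¹ - 1) / (h⁻¹ + 1)) := by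
          field_simp
          ring
      _ ≤ (1 - h) * log h⁻¹ :=
          mul_le_mul_of_nonneg_left (log_ge ((one_le_inv₀ hh).2 h1.le)) (sub_nonneg.2 h1.le)
      _ = (h - 1) * log h := by rw [log_inv]; ring

lemma two_mul_mul_one_sub_le_mul_log_add {h : ℝ} (hh : 0 < h) (c : ℝ) :
    2 * c * (1 - h) ≤ (h - 1) * log h + c ^ 2 / 2 * (1 + h) := by
  have amgm : 2 * (h - 1) ^ 2 / (h + 1) + c ^ 2 / 2 * (1 + h) - 2 * c * (1 - h)
      = (2 * (h - 1) + c * (h + 1)) ^ 2 / (2 * (h + 1)) := by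
    field_simp
    ring
  have : 0 ≤ (2 * (h - 1) + c * (h + 1)) ^ 2 / (2 * (h + 1)) := by positivity
  linarith [two_mul_sub_one_sq_div_add_one_le_mul_log hh]

variable {Ω : Type*} [MeasurableSpace Ω] {μ ν : Measure Ω}

lemma integrable_rnDeriv_sub_one_mul_log [IsFiniteMeasure μ] [IsFiniteMeasure ν]
    (hμν : klDiv μ ν ≠ ⊤) (hνμ : klDiv ν μ ≠ ⊤) :
    Integrable (fun x ↦ ((ν.rnDeriv μ x).toReal - 1) * log (ν.rnDeriv μ x).toReal) μ := by
  obtain ⟨ac, int⟩ := klDiv_ne_top_iff.1 hμν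
  obtain ⟨ac', int'⟩ := klDiv_ne_top_iff.1 hνμ
  have int_llr : Integrable (llr ν μ) μ := int.neg.congr (neg_llr ac)
  refine (((integrable_rnDeriv_mul_log_iff ac').2 int').sub int_llr).congr (.of_forall fun x ↦ ?_)
  simp only [Pi.sub_apply, llr, sub_one_mul]

lemma integral_rnDeriv_sub_one_mul_log [IsProbabilityMeasure μ] [IsProbabilityMeasure ν]
    (hμν : klDiv μ ν ≠ ⊤) (hνμ : klDiv ν μ ≠ ⊤) :
    ∫ x, ((ν.rnDeriv μ x).toReal - 1) * log (ν.rnDeriv μ x).toReal ∂μ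
      = (klDiv μ ν).toReal + (klDiv ν μ).toReal := by
  obtain ⟨ac, int⟩ := klDiv_ne_top_iff.1 hμν
  obtain ⟨ac', int'⟩ := klDiv_ne_top_iff.1 hνμ
  have int_llr : Integrable (llr ν μ) μ := int.neg.congr (neg_llr ac)
  calc ∫ x, ((ν.rnDeriv μ x).toReal - 1) * log (ν.rnDeriv μ x).toReal ∂μ
      = ∫ x, (ν.rnDeriv μ x).toReal * log (ν.rnDeriv μ x).toReal - llr ν μ x ∂μ := by
        simp only [sub_one_mul, llr]
    _ = ∫ x, llr ν μ x ∂ν - ∫ x, llr ν μ x ∂μ := by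
        rw [integral_sub ((integrable_rnDeriv_mul_log_iff ac').2 int') int_llr,
          integral_rnDeriv_mul_log ac']
    _ = (klDiv μ ν).toReal + (klDiv ν μ).toReal := by
        rw [toReal_klDiv_of_measure_eq ac (by simp), toReal_klDiv_of_measure_eq ac' (by simp),
          ← integral_congr_ae (neg_llr ac), integral_neg']
        ring

lemma two_mul_mul_measureReal_sub_le_setIntegral [IsFiniteMeasure μ] [IsFiniteMeasure ν]
    (hμν : klDiv μ ν ≠ ⊤) (hνμ : klDiv ν μ ≠ ⊤) (c : ℝ) (s : Set Ω) :
    2 * c * (μ.real s - ν.real s)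
      ≤ ∫ x in s, ((ν.rnDeriv μ x).toReal - 1) * log (ν.rnDeriv μ x).toReal ∂μ
        + c ^ 2 / 2 * (μ.real s + ν.real s) := by
  obtain ⟨ac, -⟩ := klDiv_ne_top_iff.1 hμν
  obtain ⟨ac', -⟩ := klDiv_ne_top_iff.1 hνμ
  have int_h : IntegrableOn (fun x ↦ (ν.rnDeriv μ x).toReal) s μ :=
    Measure.integrable_toReal_rnDeriv.integrableOn
  have int_one : IntegrableOn (fun _ ↦ (1 : ℝ)) s μ := integrable_const 1
  have int_log := (integrable_rnDeriv_sub_one_mul_log hμν hνμ).integrableOn (s := s)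
  have int_add : IntegrableOn (fun x ↦ c ^ 2 / 2 * (1 + (ν.rnDeriv μ x).toReal)) s μ :=
    (int_one.add int_h).const_mul _
  have key : ∫ x in s, 2 * c * (1 - (ν.rnDeriv μ x).toReal) ∂μ
      ≤ ∫ x in s, ((ν.rnDeriv μ x).toReal - 1) * log (ν.rnDeriv μ x).toReal
        + c ^ 2 / 2 * (1 + (ν.rnDeriv μ x).toReal) ∂μ := by
    refine integral_mono_ae ((int_one.sub int_h).const_mul _) (int_log.add int_add)
      (ae_restrict_of_ae ?_)
    filter_upwards [Measure.rnDeriv_pos' ac, ν.rnDeriv_lt_top μ] with x hpos hlt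
    exact two_mul_mul_one_sub_le_mul_log_add (ENNReal.toReal_pos hpos.ne' hlt.ne) c
  rw [integral_const_mul, integral_add int_log int_add, integral_const_mul,
    integral_sub int_one int_h, integral_add int_one int_h,
    Measure.setIntegral_toReal_rnDeriv ac'] at key
  simpa using key

theorem abs_measureReal_sub_le_sqrt_klDiv_add_klDiv_div_two
    [IsProbabilityMeasure μ] [IsProbabilityMeasure ν]
    (hμν : klDiv μ ν ≠ ⊤) (hνμ : klDiv ν μ ≠ ⊤) {s : Set Ω} (hs : MeasurableSet s) :
    |μ.real s - ν.real s| ≤ √((klDiv μ ν).toReal + (klDiv ν μ).toReal) / 2 := by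
  set D := μ.real s - ν.real s with hD
  -- With this choice of `c` on `s` and on its complement, the sum reads `8 D² ≤ J + 4 D²`, where `J`
  -- is the symmetrized divergence.
  have on_s := two_mul_mul_measureReal_sub_le_setIntegral hμν hνμ (2 * D) s
  have on_compl := two_mul_mul_measureReal_sub_le_setIntegral hμν hνμ (-(2 * D)) sᶜ
  have total := integral_add_compl hs (integrable_rnDeriv_sub_one_mul_log hμν hνμ)
  rw [integral_rnDeriv_sub_one_mul_log hμν hνμ] at total
  rw [probReal_compl_eq_one_sub hs, probReal_compl_eq_one_sub hs] at on_compl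
  have sq_le : (2 * D) ^ 2 ≤ (klDiv μ ν).toReal + (klDiv ν μ).toReal := by
    rw [← total]
    nlinarith [hD]
  have := abs_le_sqrt sq_le
  rw [abs_mul, abs_two] at this
  linarith

theorem abs_measureReal_sub_tilted_le [IsProbabilityMeasure μ] {f : Ω → ℝ}
    (hexp : Integrable (fun x ↦ exp (f x)) μ) (hf : Integrable f μ)
    (hf_tilted : Integrable f (μ.tilted f)) {s : Set Ω} (hs : MeasurableSet s) :
    |μ.real s - (μ.tilted f).real s| ≤ √(∫ x, f x ∂μ.tilted f - ∫ x, f x ∂μ) / 2 := by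
  have := isProbabilityMeasure_tilted hexp
  have ac := absolutelyContinuous_tilted hexp
  have ac' := tilted_absolutelyContinuous μ f
  have llr_left : llr (μ.tilted f) μ =ᵐ[μ] fun x ↦ f x - log (∫ x, exp (f x) ∂μ) :=
    log_rnDeriv_tilted_left_self hexp
  have llr_right : llr μ (μ.tilted f) =ᵐ[μ] fun x ↦ log (∫ x, exp (f x) ∂μ) - f x := by
    filter_upwards [neg_llr ac, llr_left] with x hx hl
    rw [Pi.neg_apply] at hx
    linarith
  have llr_left' := ac'.ae_eq llr_left
  have kl : klDiv μ (μ.tilted f) ≠ ⊤ :=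
    klDiv_ne_top ac (((integrable_const _).sub hf).congr llr_right.symm)
  have kl' : klDiv (μ.tilted f) μ ≠ ⊤ :=
    klDiv_ne_top ac' ((hf_tilted.sub (integrable_const _)).congr llr_left'.symm)
  convert abs_measureReal_sub_le_sqrt_klDiv_add_klDiv_div_two kl kl' hs using 3
  rw [toReal_klDiv_of_measure_eq ac (by simp), toReal_klDiv_of_measure_eq ac' (by simp),
    integral_congr_ae llr_right, integral_congr_ae llr_left',
    integral_sub (integrable_const _) hf, integral_sub hf_tilted (integrable_const _)]
  simp

end KullbackLeibler

section RiemannLiouville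

open Set
open scoped ENNReal

lemma lintegral_eq_ofReal_abs_mul_lintegral_comp_mul_left {a : ℝ} (ha : a ≠ 0) (f : ℝ → ℝ≥0∞) :
    ∫⁻ x, f x = ENNReal.ofReal |a| * ∫⁻ y, f (a * y) := by
  conv_lhs => rw [← Real.smul_map_volume_mul_left ha, lintegral_smul_measure]
  exact congrArg (ENNReal.ofReal |a| * ·)
    ((Homeomorph.mulLeft₀ a ha).measurableEmbedding.lintegral_map f)

/-- The Riemann–Liouville kernel `x₊ ^ (a - 1) / Γ(a)`, supported on the positive half-line. The
Dirichlet density of parameter `γ` is, up to normalization, a product of these kernels. -/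
noncomputable def riemannLiouvilleKernel (a : ℝ) : ℝ → ℝ≥0∞ :=
  (Ioi 0).indicator fun x ↦ ENNReal.ofReal (x ^ (a - 1) / Real.Gamma a)

namespace riemannLiouvilleKernel

lemma apply_of_pos (a : ℝ) {x : ℝ} (hx : 0 < x) :
    riemannLiouvilleKernel a x = ENNReal.ofReal (x ^ (a - 1) / Real.Gamma a) :=
  indicator_of_mem hx _

lemma apply_of_nonpos (a : ℝ) {x : ℝ} (hx : x ≤ 0) : riemannLiouvilleKernel a x = 0 :=
  indicator_of_notMem (notMem_Ioi.2 hx) _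

@[fun_prop]
lemma measurable (a : ℝ) : Measurable (riemannLiouvilleKernel a) :=
  Measurable.indicator (by fun_prop) measurableSet_Ioi

lemma mul_apply_mul_one_sub {a b s : ℝ} (ha : 0 < a) (hb : 0 < b) (hs : 0 < s) (y : ℝ) :
    riemannLiouvilleKernel a (s * y) * riemannLiouvilleKernel b (s * (1 - y))
      = ENNReal.ofReal (s ^ (a + b - 2) / Real.Gamma (a + b))
        * ProbabilityTheory.betaPDF a b y := by
  rcases le_or_gt y 0 with hy0 | hy0
  · rw [apply_of_nonpos a (mul_nonpos_of_nonneg_of_nonpos hs.le hy0), zero_mul,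
      ProbabilityTheory.betaPDF_eq_zero_of_nonpos hy0, mul_zero]
  rcases le_or_gt 1 y with hy1 | hy1
  · rw [apply_of_nonpos b (mul_nonpos_of_nonneg_of_nonpos hs.le (sub_nonpos.2 hy1)), mul_zero,
      ProbabilityTheory.betaPDF_eq_zero_of_one_le hy1, mul_zero]
  have hy1' : 0 < 1 - y := sub_pos.2 hy1
  have hΓ {c : ℝ} (hc : 0 < c) : 0 < Real.Gamma c := Real.Gamma_pos_of_pos hc
  have := hΓ ha
  have := hΓ hb
  have := hΓ (add_pos ha hb)
  rw [apply_of_pos a (mul_pos hs hy0), apply_of_pos b (mul_pos hs hy1'),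
    ProbabilityTheory.betaPDF_of_pos_lt_one hy0 hy1, ← ENNReal.ofReal_mul (by positivity),
    ← ENNReal.ofReal_mul (by positivity), Real.mul_rpow hs.le hy0.le, Real.mul_rpow hs.le hy1'.le,
    ProbabilityTheory.beta, show a + b - 2 = (a - 1) + (b - 1) by ring, Real.rpow_add hs]
  congr 1
  field_simp

theorem lintegral_mul_apply_sub {a b : ℝ} (ha : 0 < a) (hb : 0 < b) (s : ℝ) :
    ∫⁻ x, riemannLiouvilleKernel a x * riemannLiouvilleKernel b (s - x)
      = riemannLiouvilleKernel (a + b) s := by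
  rcases le_or_gt s 0 with hs | hs
  · have vanish (x : ℝ) : riemannLiouvilleKernel a x * riemannLiouvilleKernel b (s - x) = 0 := by
      rcases le_or_gt x 0 with hx | hx
      · rw [apply_of_nonpos a hx, zero_mul]
      · rw [apply_of_nonpos b (sub_nonpos.2 (hs.trans hx.le)), mul_zero]
    simp only [vanish, lintegral_zero, apply_of_nonpos _ hs]
  · calc ∫⁻ x, riemannLiouvilleKernel a x * riemannLiouvilleKernel b (s - x)
        = ENNReal.ofReal s *
            ∫⁻ y, riemannLiouvilleKernel a (s * y) * riemannLiouvilleKernel b (s * (1 - y)) := by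
          rw [lintegral_eq_ofReal_abs_mul_lintegral_comp_mul_left hs.ne', abs_of_pos hs]
          simp only [mul_one_sub]
      _ = ENNReal.ofReal s * ENNReal.ofReal (s ^ (a + b - 2) / Real.Gamma (a + b)) := by
          simp only [mul_apply_mul_one_sub ha hb hs]
          rw [lintegral_const_mul' _ _ ENNReal.ofReal_ne_top,
            ProbabilityTheory.lintegral_betaPDF_eq_one ha hb, mul_one]
      _ = riemannLiouvilleKernel (a + b) s := by
          rw [apply_of_pos _ hs, ← ENNReal.ofReal_mul hs.le,
            show a + b - 1 = 1 + (a + b - 2) by ring, Real.rpow_add hs, Real.rpow_one,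
            mul_div_assoc]

theorem lintegral_prod_mul_apply_sub_sum {n : ℕ} {a : Fin n → ℝ} (ha : ∀ i, 0 < a i) {b : ℝ}
    (hb : 0 < b) (s : ℝ) :
    ∫⁻ x : Fin n → ℝ,
        (∏ i, riemannLiouvilleKernel (a i) (x i)) * riemannLiouvilleKernel b (s - ∑ i, x i)
      = riemannLiouvilleKernel (∑ i, a i + b) s := by
  induction n generalizing s with
  | zero => simp [Measure.volume_pi_eq_dirac (0 : Fin 0 → ℝ)]
  | succ n ih =>
    have tail_pos : 0 < ∑ i : Fin n, a i.succ + b :=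
      add_pos_of_nonneg_of_pos (Finset.sum_nonneg fun i _ ↦ (ha _).le) hb
    have tail (x : ℝ) : ∫⁻ y : Fin n → ℝ, riemannLiouvilleKernel (a 0) x *
          ((∏ i, riemannLiouvilleKernel (a i.succ) (y i)) *
            riemannLiouvilleKernel b (s - x - ∑ i, y i))
        = riemannLiouvilleKernel (a 0) x *
            riemannLiouvilleKernel (∑ i : Fin n, a i.succ + b) (s - x) := by
      rw [lintegral_const_mul _ (by fun_prop), ih (fun i ↦ ha i.succ)]
    rw [← (volume_preserving_piFinSuccAbove (fun _ : Fin (n + 1) ↦ ℝ) 0).symm.lintegral_comp_emb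
      (MeasurableEquiv.measurableEmbedding _), Measure.volume_eq_prod,
      lintegral_prod _ (Measurable.aemeasurable (by fun_prop))]
    simp only [MeasurableEquiv.piFinSuccAbove_symm_apply, Fin.insertNthEquiv, Equiv.coe_fn_mk,
      Fin.insertNth_zero', Fin.prod_univ_succ, Fin.sum_univ_succ, Fin.cons_zero, Fin.cons_succ,
      mul_assoc, ← sub_sub, tail]
    rw [lintegral_mul_apply_sub (ha 0) tail_pos, add_assoc]

end riemannLiouvilleKernel

end RiemannLiouville

section Dirichlet

open Set Real ProbabilityTheory Topology

variable {n : ℕ} {γ δ : Fin (n + 1) → ℝ}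

lemma fullProb_castSucc (x : Fin n → ℝ) (i : Fin n) : fullProb (n + 1) x i.castSucc = x i := by
  simp [fullProb]

lemma fullProb_last (x : Fin n → ℝ) : fullProb (n + 1) x (Fin.last n) = 1 - ∑ i, x i := by
  simp [fullProb]

@[fun_prop]
lemma measurable_fullProb {K : ℕ} (k : Fin K) : Measurable fun x ↦ fullProb K x k := by
  unfold fullProb
  split_ifs <;> fun_prop

lemma mem_simplexCoords_succ_iff {x : Fin n → ℝ} :
    x ∈ simplexCoords (n + 1) ↔ ∀ k, 0 < fullProb (n + 1) x k := by
  rw [Fin.forall_fin_succ', fullProb_last, sub_pos]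
  simp only [fullProb_castSucc]
  rfl

lemma measurableSet_simplexCoords (K : ℕ) : MeasurableSet (simplexCoords K) := by
  simp only [simplexCoords, measurableSet_setOfPred]
  refine (Measurable.forall fun i ↦ ?_).and ?_
  · exact measurableSet_setOfPred.1 (measurableSet_lt (by fun_prop) (by fun_prop))
  · exact measurableSet_setOfPred.1 (measurableSet_lt (by fun_prop) (by fun_prop))

lemma Gamma_sum_pos (hγ : ∀ k, 0 < γ k) : 0 < Gamma (∑ k, γ k) :=
  Gamma_pos_of_pos (Finset.sum_pos (fun k _ ↦ hγ k) Finset.univ_nonempty)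

lemma multiBeta_pos (hγ : ∀ k, 0 < γ k) : 0 < multiBeta γ :=
  div_pos (Finset.prod_pos fun k _ ↦ Gamma_pos_of_pos (hγ k)) (Gamma_sum_pos hγ)

lemma dirichletPdf_nonneg (hγ : ∀ k, 0 < γ k) {x : Fin n → ℝ} (hx : x ∈ simplexCoords (n + 1)) :
    0 ≤ dirichletPdf γ x :=
  mul_nonneg (one_div_nonneg.2 (multiBeta_pos hγ).le)
    (Finset.prod_nonneg fun k _ ↦ rpow_nonneg (mem_simplexCoords_succ_iff.1 hx k).le _)

@[fun_prop]
lemma measurable_dirichletPdf {K : ℕ} (γ : Fin K → ℝ) : Measurable (dirichletPdf γ) := by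
  unfold dirichletPdf
  fun_prop

lemma indicator_simplexCoords_ofReal_dirichletPdf (hγ : ∀ k, 0 < γ k) (x : Fin n → ℝ) :
    (simplexCoords (n + 1)).indicator (fun x ↦ ENNReal.ofReal (dirichletPdf γ x)) x
      = ENNReal.ofReal (Gamma (∑ k, γ k))
        * ∏ k, riemannLiouvilleKernel (γ k) (fullProb (n + 1) x k) := by
  have hΓ := Gamma_sum_pos hγ
  by_cases hx : x ∈ simplexCoords (n + 1)
  · have hp := mem_simplexCoords_succ_iff.1 hx
    have factor_nonneg (k) : 0 ≤ fullProb (n + 1) x k ^ (γ k - 1) / Gamma (γ k) :=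
      div_nonneg (rpow_nonneg (hp k).le _) (Gamma_pos_of_pos (hγ k)).le
    simp only [indicator_of_mem hx, fun k ↦ riemannLiouvilleKernel.apply_of_pos (γ k) (hp k)]
    rw [← ENNReal.ofReal_prod_of_nonneg fun k _ ↦ factor_nonneg k, ← ENNReal.ofReal_mul hΓ.le,
      Finset.prod_div_distrib, dirichletPdf, multiBeta, one_div_div, div_mul_eq_mul_div,
      mul_div_assoc]
  · obtain ⟨k, hk⟩ := not_forall.1 (mt mem_simplexCoords_succ_iff.2 hx)
    rw [indicator_of_notMem hx, Finset.prod_eq_zero (Finset.mem_univ k)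
      (riemannLiouvilleKernel.apply_of_nonpos _ (not_lt.1 hk)), mul_zero]

theorem lintegral_simplexCoords_dirichletPdf (hγ : ∀ k, 0 < γ k) :
    ∫⁻ x in simplexCoords (n + 1), ENNReal.ofReal (dirichletPdf γ x) = 1 := by
  have hΓ := Gamma_sum_pos hγ
  have conv := riemannLiouvilleKernel.lintegral_prod_mul_apply_sub_sum
    (fun i ↦ hγ (Fin.castSucc i)) (hγ (Fin.last n)) 1
  rw [← Fin.sum_univ_castSucc, riemannLiouvilleKernel.apply_of_pos _ one_pos, one_rpow] at conv
  calc ∫⁻ x in simplexCoords (n + 1), ENNReal.ofReal (dirichletPdf γ x)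
      = ∫⁻ x : Fin n → ℝ, ENNReal.ofReal (Gamma (∑ k, γ k))
          * ∏ k, riemannLiouvilleKernel (γ k) (fullProb (n + 1) x k) := by
        rw [← lintegral_indicator (measurableSet_simplexCoords _)]
        exact lintegral_congr (indicator_simplexCoords_ofReal_dirichletPdf hγ)
    _ = ENNReal.ofReal (Gamma (∑ k, γ k)) * ENNReal.ofReal (1 / Gamma (∑ k, γ k)) := by
        rw [lintegral_const_mul' _ _ ENNReal.ofReal_ne_top]
        simp only [Fin.prod_univ_castSucc, fullProb_castSucc, fullProb_last, conv]
    _ = 1 := by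
        rw [← ENNReal.ofReal_mul hΓ.le, mul_one_div_cancel hΓ.ne', ENNReal.ofReal_one]

/-- The Dirichlet distribution of parameter `γ`, as a measure on the coordinate space `ℝ^(K-1)`
of the simplex. -/
noncomputable def dirichletMeasure {K : ℕ} (γ : Fin K → ℝ) : Measure (Fin (K - 1) → ℝ) :=
  (volume.restrict (simplexCoords K)).withDensity fun x ↦ ENNReal.ofReal (dirichletPdf γ x)

lemma isProbabilityMeasure_dirichletMeasure (hγ : ∀ k, 0 < γ k) :
    IsProbabilityMeasure (dirichletMeasure γ) :=
  ⟨by rw [dirichletMeasure, withDensity_apply _ .univ, Measure.restrict_univ,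
    lintegral_simplexCoords_dirichletPdf hγ]⟩

/-- The log-linear statistic `∑ k, δ k * log (p k)` on the simplex, the exponent of the tilt
taking the Dirichlet distribution of parameter `γ` to that of parameter `γ + δ`. -/
noncomputable def weightedLogProb {K : ℕ} (δ : Fin K → ℝ) (x : Fin (K - 1) → ℝ) : ℝ :=
  ∑ k, δ k * log (fullProb K x k)

@[fun_prop]
lemma measurable_weightedLogProb {K : ℕ} (δ : Fin K → ℝ) : Measurable (weightedLogProb δ) := by
  unfold weightedLogProb
  fun_prop

lemma weightedLogProb_smul {K : ℕ} (t : ℝ) (δ : Fin K → ℝ) (x : Fin (K - 1) → ℝ) :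
    weightedLogProb (t • δ) x = t * weightedLogProb δ x := by
  simp only [weightedLogProb, Pi.smul_apply, smul_eq_mul, Finset.mul_sum, mul_assoc]

lemma eventually_forall_pos_add_smul (hγ : ∀ k, 0 < γ k) (δ : Fin (n + 1) → ℝ) :
    ∀ᶠ t : ℝ in 𝓝 0, ∀ k, 0 < (γ + t • δ) k := by
  refine Filter.eventually_all.2 fun k ↦ ?_
  have cont : Continuous fun t : ℝ ↦ (γ + t • δ) k := by
    simp only [Pi.add_apply, Pi.smul_apply]
    fun_prop
  exact cont.continuousAt.eventually_const_lt (by simpa using hγ k)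

lemma hasDerivAt_log_Gamma {x : ℝ} (hx : 0 < x) :
    HasDerivAt (fun y ↦ log (Gamma y)) (digamma x) x := by
  have ne_neg_nat (m : ℕ) : x ≠ -m := (lt_of_le_of_lt (neg_nonpos.2 m.cast_nonneg) hx).ne'
  exact (differentiableAt_Gamma ne_neg_nat).hasDerivAt.log (Gamma_pos_of_pos hx).ne'

lemma log_multiBeta (hγ : ∀ k, 0 < γ k) :
    log (multiBeta γ) = ∑ k, log (Gamma (γ k)) - log (Gamma (∑ k, γ k)) := by
  have gamma_ne (k) : Gamma (γ k) ≠ 0 := (Gamma_pos_of_pos (hγ k)).ne'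
  rw [multiBeta, log_div (Finset.prod_ne_zero_iff.2 fun k _ ↦ gamma_ne k)
    (Gamma_sum_pos hγ).ne',
    log_prod fun k _ ↦ gamma_ne k]

lemma hasDerivAt_log_multiBeta_add_smul (hγ : ∀ k, 0 < γ k) (δ : Fin (n + 1) → ℝ) :
    HasDerivAt (fun t : ℝ ↦ log (multiBeta (γ + t • δ)))
      (∑ k, δ k * digamma (γ k) - (∑ k, δ k) * digamma (∑ k, γ k)) 0 := by
  have sum_pos : 0 < ∑ k, γ k := Finset.sum_pos (fun k _ ↦ hγ k) Finset.univ_nonempty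
  have log_Gamma_line {a : ℝ} (ha : 0 < a) (b : ℝ) :
      HasDerivAt (fun t ↦ log (Gamma (a + t * b))) (b * digamma a) 0 := by
    have line : HasDerivAt (fun t ↦ a + t * b) b 0 := by
      simpa using ((hasDerivAt_id (0 : ℝ)).mul_const b).const_add a
    rw [mul_comm]
    exact HasDerivAt.comp 0 (by simpa using hasDerivAt_log_Gamma ha) line
  refine ((HasDerivAt.fun_sum fun k _ ↦ log_Gamma_line (hγ k) (δ k)).sub
    (log_Gamma_line sum_pos (∑ k, δ k))).congr_of_eventuallyEq ?_
  filter_upwards [eventually_forall_pos_add_smul hγ δ] with t ht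
  simp only [log_multiBeta ht, Pi.add_apply, Pi.smul_apply, Pi.sub_apply, smul_eq_mul,
    Finset.sum_add_distrib, Finset.mul_sum]

lemma dirichletPdf_mul_exp_weightedLogProb (hγδ : ∀ k, 0 < (γ + δ) k)
    {x : Fin n → ℝ} (hx : x ∈ simplexCoords (n + 1)) :
    dirichletPdf γ x * exp (weightedLogProb δ x)
      = multiBeta (γ + δ) / multiBeta γ * dirichletPdf (γ + δ) x := by
  have hp := mem_simplexCoords_succ_iff.1 hx
  have exp_eq : exp (weightedLogProb δ x) = ∏ k, fullProb (n + 1) x k ^ δ k := by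
    rw [weightedLogProb, exp_sum]
    exact Finset.prod_congr rfl fun k _ ↦ by rw [rpow_def_of_pos (hp k), mul_comm]
  have prod_eq : ∏ k, fullProb (n + 1) x k ^ ((γ + δ) k - 1)
      = (∏ k, fullProb (n + 1) x k ^ (γ k - 1)) * ∏ k, fullProb (n + 1) x k ^ δ k := by
    rw [← Finset.prod_mul_distrib]
    exact Finset.prod_congr rfl fun k _ ↦ by
      rw [← rpow_add (hp k), Pi.add_apply, add_sub_right_comm]
  have hB := (multiBeta_pos hγδ).ne'
  rw [exp_eq, dirichletPdf, dirichletPdf, prod_eq]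
  field_simp

lemma withDensity_exp_weightedLogProb_dirichletMeasure (hγ : ∀ k, 0 < γ k)
    (hγδ : ∀ k, 0 < (γ + δ) k) :
    (dirichletMeasure γ).withDensity (fun x ↦ ENNReal.ofReal (exp (weightedLogProb δ x)))
      = ENNReal.ofReal (multiBeta (γ + δ) / multiBeta γ) • dirichletMeasure (γ + δ) := by
  have ratio_nonneg := div_nonneg (multiBeta_pos hγδ).le (multiBeta_pos hγ).le
  rw [dirichletMeasure, dirichletMeasure, ← withDensity_mul _ (by fun_prop) (by fun_prop),
    ← withDensity_smul _ (by fun_prop)]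
  refine withDensity_congr_ae ?_
  filter_upwards [ae_restrict_mem (measurableSet_simplexCoords _)] with x hx
  rw [Pi.mul_apply, Pi.smul_apply, smul_eq_mul, ← ENNReal.ofReal_mul (dirichletPdf_nonneg hγ hx),
    ← ENNReal.ofReal_mul ratio_nonneg, dirichletPdf_mul_exp_weightedLogProb hγδ hx]

lemma lintegral_exp_weightedLogProb (hγ : ∀ k, 0 < γ k) (hγδ : ∀ k, 0 < (γ + δ) k) :
    ∫⁻ x, ENNReal.ofReal (exp (weightedLogProb δ x)) ∂dirichletMeasure γ
      = ENNReal.ofReal (multiBeta (γ + δ) / multiBeta γ) := by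
  have := isProbabilityMeasure_dirichletMeasure hγδ
  have h := congrArg (· univ) (withDensity_exp_weightedLogProb_dirichletMeasure hγ hγδ)
  simpa using h

lemma integrable_exp_weightedLogProb (hγ : ∀ k, 0 < γ k) (hγδ : ∀ k, 0 < (γ + δ) k) :
    Integrable (fun x ↦ exp (weightedLogProb δ x)) (dirichletMeasure γ) := by
  refine ⟨by fun_prop, ?_⟩
  rw [hasFiniteIntegral_iff_ofReal (.of_forall fun _ ↦ (exp_pos _).le),
    lintegral_exp_weightedLogProb hγ hγδ]
  exact ENNReal.ofReal_lt_top

lemma integral_exp_weightedLogProb (hγ : ∀ k, 0 < γ k) (hγδ : ∀ k, 0 < (γ + δ) k) :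
    ∫ x, exp (weightedLogProb δ x) ∂dirichletMeasure γ = multiBeta (γ + δ) / multiBeta γ := by
  rw [integral_eq_lintegral_of_nonneg_ae (.of_forall fun _ ↦ (exp_pos _).le) (by fun_prop),
    lintegral_exp_weightedLogProb hγ hγδ,
    ENNReal.toReal_ofReal (div_nonneg (multiBeta_pos hγδ).le (multiBeta_pos hγ).le)]

theorem tilted_weightedLogProb_dirichletMeasure (hγ : ∀ k, 0 < γ k) (hγδ : ∀ k, 0 < (γ + δ) k) :
    (dirichletMeasure γ).tilted (weightedLogProb δ) = dirichletMeasure (γ + δ) := by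
  have ratio_pos := div_pos (multiBeta_pos hγδ) (multiBeta_pos hγ)
  have ratio_ne_zero := (ENNReal.ofReal_pos.2 ratio_pos).ne'
  simp only [Measure.tilted, integral_exp_weightedLogProb hγ hγδ,
    ENNReal.ofReal_div_of_pos ratio_pos, ENNReal.div_eq_inv_mul]
  exact (withDensity_smul _ (by fun_prop)).trans <| by
    rw [withDensity_exp_weightedLogProb_dirichletMeasure hγ hγδ, smul_smul,
      ENNReal.inv_mul_cancel ratio_ne_zero ENNReal.ofReal_ne_top, one_smul]

lemma mem_interior_integrableExpSet_weightedLogProb (hγ : ∀ k, 0 < γ k) (δ : Fin (n + 1) → ℝ) :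
    0 ∈ interior (integrableExpSet (weightedLogProb δ) (dirichletMeasure γ)) := by
  refine mem_interior_iff_mem_nhds.2 ?_
  filter_upwards [eventually_forall_pos_add_smul hγ δ] with t ht
  change Integrable (fun x ↦ exp (t * weightedLogProb δ x)) _
  simpa only [weightedLogProb_smul] using integrable_exp_weightedLogProb hγ ht

lemma cgf_weightedLogProb_dirichletMeasure (hγ : ∀ k, 0 < γ k) {t : ℝ}
    (ht : ∀ k, 0 < (γ + t • δ) k) :
    cgf (weightedLogProb δ) (dirichletMeasure γ) t
      = log (multiBeta (γ + t • δ)) - log (multiBeta γ) := by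
  rw [cgf, mgf]
  simp only [← weightedLogProb_smul]
  rw [integral_exp_weightedLogProb hγ ht, log_div (multiBeta_pos ht).ne' (multiBeta_pos hγ).ne']

theorem integrable_weightedLogProb (hγ : ∀ k, 0 < γ k) (δ : Fin (n + 1) → ℝ) :
    Integrable (weightedLogProb δ) (dirichletMeasure γ) :=
  integrable_of_mem_interior_integrableExpSet (mem_interior_integrableExpSet_weightedLogProb hγ δ)

theorem integral_weightedLogProb (hγ : ∀ k, 0 < γ k) (δ : Fin (n + 1) → ℝ) :
    ∫ x, weightedLogProb δ x ∂dirichletMeasure γ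
      = ∑ k, δ k * digamma (γ k) - (∑ k, δ k) * digamma (∑ k, γ k) := by
  have := isProbabilityMeasure_dirichletMeasure hγ
  have cgf_eq : cgf (weightedLogProb δ) (dirichletMeasure γ)
      =ᶠ[𝓝 0] fun t ↦ log (multiBeta (γ + t • δ)) - log (multiBeta γ) := by
    filter_upwards [eventually_forall_pos_add_smul hγ δ] with t ht
    exact cgf_weightedLogProb_dirichletMeasure hγ ht
  calc ∫ x, weightedLogProb δ x ∂dirichletMeasure γ
      = deriv (cgf (weightedLogProb δ) (dirichletMeasure γ)) 0 := by
        rw [deriv_cgf_zero (mem_interior_integrableExpSet_weightedLogProb hγ δ), probReal_univ,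
          div_one]
    _ = ∑ k, δ k * digamma (γ k) - (∑ k, δ k) * digamma (∑ k, γ k) :=
        cgf_eq.deriv_eq.trans ((hasDerivAt_log_multiBeta_add_smul hγ δ).sub_const _).deriv

theorem abs_measureReal_dirichletMeasure_sub_le {α β : Fin (n + 1) → ℝ} (hα : ∀ k, 0 < α k)
    (hβ : ∀ k, 0 < β k) {s : Set (Fin n → ℝ)} (hs : MeasurableSet s) :
    |(dirichletMeasure α).real s - (dirichletMeasure β).real s|
      ≤ √(∑ k, (β k - α k) * (digamma (β k) - digamma (α k))
        - (∑ k, β k - ∑ k, α k) * (digamma (∑ k, β k) - digamma (∑ k, α k))) / 2 := by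
  have := isProbabilityMeasure_dirichletMeasure hα
  have hαβ (k) : 0 < (α + (β - α)) k := by simpa using hβ k
  have tilt := tilted_weightedLogProb_dirichletMeasure hα hαβ
  rw [add_sub_cancel] at tilt
  have bound := abs_measureReal_sub_tilted_le (integrable_exp_weightedLogProb hα hαβ)
    (integrable_weightedLogProb hα (β - α)) (tilt ▸ integrable_weightedLogProb hβ (β - α)) hs
  rw [tilt, integral_weightedLogProb hα, integral_weightedLogProb hβ] at bound
  refine bound.trans_eq ?_
  simp only [Pi.sub_apply, mul_sub, Finset.sum_sub_distrib]
  ring_nf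

end Dirichlet

section ConfidenceVector

variable {epsE Δ epsA : ℝ}

lemma gammaOut_pos {K : ℕ} (hK : 2 ≤ K) (hεe : 0 < epsE) (hεa₀ : 0 < epsA) (hεa₁ : epsA < 1)
    (k : Fin K) : 0 < gammaOut K epsE epsA k := by
  have hK' : 0 < (K : ℝ) - 1 := sub_pos.2 (Nat.one_lt_cast.2 hK)
  have := sub_pos.2 hεa₁
  unfold gammaOut
  split_ifs <;> positivity

lemma gammaIn_pos {K : ℕ} (hK : 2 ≤ K) (hεe : 0 < epsE) (hΔ : -1 < Δ) (hεa₁ : Δ / (1 + Δ) < epsA)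
    (hεa₂ : epsA < 1) (k : Fin K) : 0 < gammaIn K epsE Δ epsA k := by
  have hK' : 0 < (K : ℝ) - 1 := sub_pos.2 (Nat.one_lt_cast.2 hK)
  have hΔ' : 0 < 1 + Δ := by linarith
  have := sub_pos.2 hεa₂
  have := sub_pos.2 ((div_lt_iff₀ hΔ').1 hεa₁)
  unfold gammaIn
  split_ifs <;> positivity

lemma sum_ite_val_eq_zero {K : ℕ} [NeZero K] (a b : ℝ) :
    ∑ k : Fin K, (if (k : ℕ) = 0 then a else b) = a + ((K : ℝ) - 1) * b := by
  obtain ⟨n, rfl⟩ := Nat.exists_eq_succ_of_ne_zero (NeZero.ne K)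
  simp [Fin.sum_univ_succ]

lemma sum_gammaIn_eq_sum_gammaOut {K : ℕ} (hK : 2 ≤ K) (epsE Δ epsA : ℝ) :
    ∑ k, gammaIn K epsE Δ epsA k = ∑ k, gammaOut K epsE epsA k := by
  have : NeZero K := ⟨by omega⟩
  have hK' : (K : ℝ) - 1 ≠ 0 := (sub_pos.2 (Nat.one_lt_cast.2 hK)).ne'
  unfold gammaIn gammaOut
  rw [sum_ite_val_eq_zero, sum_ite_val_eq_zero]
  field_simp
  ring

lemma sum_gammaIn_sub_gammaOut_mul_digamma_sub {K : ℕ} (hK : 2 ≤ K) (epsE Δ epsA : ℝ) :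
    ∑ k, (gammaIn K epsE Δ epsA k - gammaOut K epsE epsA k)
        * (digamma (gammaIn K epsE Δ epsA k) - digamma (gammaOut K epsE epsA k))
      = Δ * (1 - epsA) / epsE
        * (digamma ((1 + Δ) * (1 - epsA) / epsE) - digamma ((1 - epsA) / epsE)
          + digamma (epsA / (((K : ℝ) - 1) * epsE))
          - digamma ((epsA * (1 + Δ) - Δ) / (((K : ℝ) - 1) * epsE))) := by
  have : NeZero K := ⟨by omega⟩
  have hK' : (K : ℝ) - 1 ≠ 0 := (sub_pos.2 (Nat.one_lt_cast.2 hK)).ne'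
  calc ∑ k, (gammaIn K epsE Δ epsA k - gammaOut K epsE epsA k)
          * (digamma (gammaIn K epsE Δ epsA k) - digamma (gammaOut K epsE epsA k))
      = ∑ k : Fin K, if (k : ℕ) = 0 then
          Δ * (1 - epsA) / epsE
            * (digamma ((1 + Δ) * (1 - epsA) / epsE) - digamma ((1 - epsA) / epsE))
        else -(Δ * (1 - epsA) / epsE / ((K : ℝ) - 1))
            * (digamma ((epsA * (1 + Δ) - Δ) / (((K : ℝ) - 1) * epsE))
              - digamma (epsA / (((K : ℝ) - 1) * epsE))) := by
        refine Finset.sum_congr rfl fun k _ ↦ ?_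
        unfold gammaIn gammaOut
        split_ifs <;> congr 1 <;> field_simp <;> ring
    _ = _ := by
        rw [sum_ite_val_eq_zero]
        field_simp
        ring

end ConfidenceVector

theorem stmt9_general (K : ℕ) (hK : 2 ≤ K) (epsE Δ epsA : ℝ) (hεe : 0 < epsE) (hΔ : -1 < Δ)
    (hεa₀ : 0 < epsA) (hεa₁ : Δ / (1 + Δ) < epsA) (hεa₂ : epsA < 1)
    {A : Set (Fin (K - 1) → ℝ)} (hA : MeasurableSet A) :
    |(dirichletMeasure (gammaOut K epsE epsA)).real A
        - (dirichletMeasure (gammaIn K epsE Δ epsA)).real A|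
      ≤ AdvCVub Δ epsA epsE K / 2 := by
  obtain ⟨n, rfl⟩ : ∃ n, K = n + 1 := ⟨K - 1, by omega⟩
  have bound := abs_measureReal_dirichletMeasure_sub_le (gammaOut_pos hK hεe hεa₀ hεa₂)
    (gammaIn_pos hK hεe hΔ hεa₁ hεa₂) hA
  rwa [sum_gammaIn_eq_sum_gammaOut hK, sub_self, zero_mul, sub_zero,
    sum_gammaIn_sub_gammaOut_mul_digamma_sub hK] at bound

/-- Proposition 1 (confidence-vector disclosure): the advantage of the attacker,
i.e. the gap `μ^out(A) - μ^in(A)` achievable by any (measurable) decision region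
`A`, is bounded by `Adv^CV-ub`. -/
theorem stmt9 (K : ℕ) (hK : 2 ≤ K) (epsE Δ epsA : ℝ)
    (hεe : 0 < epsE) (hΔ : 0 ≤ Δ) (hεa₁ : Δ / (1 + Δ) < epsA) (hεa₂ : epsA < 1)
    (μout μin : Measure (Fin (K - 1) → ℝ))
    (hout : μout = (volume.restrict (simplexCoords K)).withDensity
        (fun x => ENNReal.ofReal (dirichletPdf (gammaOut K epsE epsA) x)))
    (hin : μin = (volume.restrict (simplexCoords K)).withDensity
        (fun x => ENNReal.ofReal (dirichletPdf (gammaIn K epsE Δ epsA) x)))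
    (A : Set (Fin (K - 1) → ℝ)) (hA : MeasurableSet A) (hA' : A ⊆ simplexCoords K) :
    (μout A).toReal - (μin A).toReal ≤ AdvCVub Δ epsA epsE K := by
  subst hout hin
  exact (le_abs_self _).trans <| (stmt9_general K hK epsE Δ epsA hεe (by linarith)
    ((div_nonneg hΔ (by linarith)).trans_lt hεa₁) hεa₁ hεa₂ hA).trans
      (half_le_self (Real.sqrt_nonneg _))
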